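/- Let S be a nearly simple monoid, i.e., S has a unique minimal two-sided ideal K and every non-invertible element of S lies in K. If K contains an idempotent which is minimal among the idempotents of S, then S is completely regular: every element a ∈ S has some x ∈ S with a x a = a and a x = x a. -/

import Mathlib

/-- A two-sided ideal of a monoid `S` (as a subset). -/
def IsTwoSidedIdealSet {S : Type*} [Monoid S] (I : Set S) : Prop :=
  I.Nonempty ∧ ∀ s : S, ∀ a ∈ I, s * a ∈ I ∧ a * s ∈ I

/-- A nearly simple monoid (unique minimal two-sided ideal `K` containing all
non-invertible elements) whose kernel `K` contains an idempotent that is minimal among the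
idempotents of `S` is completely regular. -/
theorem stmt_2 {S : Type*} [Monoid S] (K : Set S)
    (hK : IsTwoSidedIdealSet K)
    (hKmin : ∀ I : Set S, IsTwoSidedIdealSet I → I ⊆ K → I = K)
    (hKuniq : ∀ I : Set S, IsTwoSidedIdealSet I →
      (∀ J : Set S, IsTwoSidedIdealSet J → J ⊆ I → J = I) → I = K)
    (hnoninv : ∀ a : S, ¬(∃ b : S, a * b = 1 ∧ b * a = 1) → a ∈ K)
    (hidem : ∃ p ∈ K, p * p = p ∧
      ∀ q : S, q * q = q → q = q * p → q = p * q → q = p) :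
    ∀ a : S, ∃ x : S, a * x * a = a ∧ a * x = x * a := by
  have key : ∀ a ∈ K, ∀ b ∈ K, ∃ u v : S, b = u * a * v := by
    intro a ha b hb
    have h := hKmin {x | ∃ u v : S, x = u * a * v} ?_ ?_
    · rw [← h] at hb
      exact hb
    · refine ⟨⟨a, 1, 1, by simp⟩, ?_⟩
      rintro s x ⟨u, v, rfl⟩
      exact ⟨⟨s * u, v, by simp only [mul_assoc]⟩, ⟨u, v * s, by simp only [mul_assoc]⟩⟩
    · rintro x ⟨u, v, rfl⟩
      exact (hK.2 v _ (hK.2 u a ha).1).2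
  obtain ⟨p, hpK, hp, hmin⟩ := hidem
  have hp' : ∀ x, p * (p * x) = p * x := fun x => by rw [← mul_assoc, hp]
  have grp : ∀ c : S, p * c = c → c * p = c →
      ∃ g : S, p * g = g ∧ g * p = g ∧ g * c = p ∧ c * g = p := by
    intro c h1 h2
    have hc : c ∈ K := h1 ▸ (hK.2 c p hpK).2
    obtain ⟨u, v, huv⟩ := key c hc p hpK
    have h1' : ∀ x, p * (c * x) = c * x := fun x => by rw [← mul_assoc, h1]
    have h2' : ∀ x, c * (p * x) = c * x := fun x => by rw [← mul_assoc, h2]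
    have e : (p * u * p) * c * (p * v * p) = p := by
      have : (p * u * p) * c * (p * v * p) = p * (u * c * v) * p := by
        simp only [mul_assoc, h1', h2']
      rw [this, ← huv, hp, hp]
    obtain ⟨U, hU⟩ : ∃ U, U = p * u * p := ⟨_, rfl⟩
    obtain ⟨V, hV⟩ : ∃ V, V = p * v * p := ⟨_, rfl⟩
    rw [← hU, ← hV] at e
    have U1 : p * U = U := by simp only [hU, mul_assoc, hp']
    have U2 : U * p = U := by simp only [hU, mul_assoc, hp]
    have V1 : p * V = V := by simp only [hV, mul_assoc, hp']
    refine ⟨V * U, by rw [← mul_assoc, V1], by rw [mul_assoc, U2], ?_, ?_⟩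
    · apply hmin
      · calc V * U * c * (V * U * c) = V * (U * c * V) * (U * c) := by simp only [mul_assoc]
          _ = V * U * c := by rw [e, mul_assoc, ← mul_assoc p, U1, mul_assoc]
      · rw [mul_assoc _ c p, h2]
      · rw [← mul_assoc, ← mul_assoc, V1]
    · apply hmin
      · calc c * (V * U) * (c * (V * U)) = c * V * (U * c * V) * U := by simp only [mul_assoc]
          _ = c * (V * U) := by rw [e, mul_assoc, U1, mul_assoc]
      · rw [mul_assoc, mul_assoc, U2]
      · rw [h1']
  intro a
  by_cases hinv : ∃ b : S, a * b = 1 ∧ b * a = 1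
  · obtain ⟨b, h1, h2⟩ := hinv
    exact ⟨b, by rw [h1, one_mul], by rw [h1, h2]⟩
  obtain ⟨u, v, rfl⟩ := key p hpK a (hnoninv a hinv)
  obtain ⟨g, g1, g2, g3, g4⟩ := grp (p * (v * (u * p))) (by rw [hp']) (by simp only [mul_assoc, hp])
  have ax : u * p * v * (u * g * g * v) = u * g * v := by
    calc _ = u * (p * (v * (u * p)) * g) * g * v := by
          rw [← g1]; simp only [mul_assoc, hp']
      _ = _ := by rw [g4, mul_assoc u p g, g1]
  have xa : (u * g * g * v) * (u * p * v) = u * g * v := by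
    calc _ = u * g * (g * (p * (v * (u * p)))) * v := by
          rw [← mul_assoc g p, g2]; simp only [mul_assoc]
      _ = _ := by rw [g3, mul_assoc u g p, g2]
  refine ⟨u * g * g * v, ?_, by rw [ax, xa]⟩
  rw [ax]
  calc _ = u * (g * (p * (v * (u * p)))) * v := by
        rw [← mul_assoc g p, g2]; simp only [mul_assoc]
    _ = _ := by rw [g3]
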